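/- arXiv:math/0005058 — 2 statements merged into one kernel-verified Lean document; each statement's English description precedes it below -/
import Mathlib

section
/- Direct theorem (Theorem 4.1). Let V = {Vⁿ} be a general source and W = {Wⁿ} a general channel. Suppose there exist a channel input X = {Xⁿ} (possibly correlated with the source) and a sequence {γₙ} of reals with γₙ > 0, γₙ → 0 and nγₙ → ∞, such that limₙ Pr{ (1/n) log( Wⁿ(Yⁿ|Xⁿ) / P_{Yⁿ}(Yⁿ) ) ≤ (1/n) log( 1 / P_{Vⁿ}(Vⁿ) ) + γₙ } = 0, where Yⁿ is the channel output due to input Xⁿ. Then V is transmissible over W. -/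
open Filter Real Topology

namespace ISC

/-- Words of length `n` over alphabet `A`. -/
abbrev Word (A : Type*) (n : ℕ) : Type _ := Fin n → A

/-- `p` is a probability mass function. -/
def IsPMF {α : Type*} (p : α → ℝ) : Prop :=
  (∀ a, 0 ≤ p a) ∧ HasSum p 1

/-- Probability of the event `S` under the pmf `p`. -/
noncomputable def prob {α : Type*} (p : α → ℝ) (S : Set α) : ℝ :=
  ∑' a, S.indicator p a

/-- Output marginal `P_{Yⁿ}` of the channel `W` fed with the joint input law `P_{VⁿXⁿ}`. -/
noncomputable def outDist {𝒱 𝒳 𝒴 : Type*} {n : ℕ}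
    (PVX : Word 𝒱 n × Word 𝒳 n → ℝ) (W : Word 𝒳 n → Word 𝒴 n → ℝ)
    (y : Word 𝒴 n) : ℝ :=
  ∑' vx : Word 𝒱 n × Word 𝒳 n, PVX vx * W vx.2 y

/-- Joint law of `(Vⁿ, Xⁿ, Yⁿ)`: `P_{VⁿXⁿ}(v,x) · Wⁿ(y|x)`. -/
noncomputable def jointLaw {𝒱 𝒳 𝒴 : Type*} {n : ℕ}
    (PVX : Word 𝒱 n × Word 𝒳 n → ℝ) (W : Word 𝒳 n → Word 𝒴 n → ℝ) :
    Word 𝒱 n × Word 𝒳 n × Word 𝒴 n → ℝ :=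
  fun z => PVX (z.1, z.2.1) * W z.2.1 z.2.2

/-- The joint input law `P_{VⁿXⁿ}` induced by the deterministic encoder `φ`:
`P_{Vⁿ}(v) 1{x = φ(v)}`. -/
noncomputable def codeInput {𝒱 𝒳 : Type*} [DecidableEq 𝒳] {n : ℕ} (PV : Word 𝒱 n → ℝ)
    (φ : Word 𝒱 n → Word 𝒳 n) : Word 𝒱 n × Word 𝒳 n → ℝ :=
  fun vx => if vx.2 = φ vx.1 then PV vx.1 else 0

/-- Error probability `εₙ` of the joint source-channel code `(φ, ψ)`. -/
noncomputable def errProb {𝒱 𝒳 𝒴 : Type*} {n : ℕ}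
    (PV : Word 𝒱 n → ℝ) (W : Word 𝒳 n → Word 𝒴 n → ℝ)
    (φ : Word 𝒱 n → Word 𝒳 n) (ψ : Word 𝒴 n → Word 𝒱 n) : ℝ :=
  ∑' v, PV v * prob (W (φ v)) {y | ψ y ≠ v}

/-- `V` is transmissible over `W`. -/
def Transmissible {𝒱 𝒳 𝒴 : Type*} (PV : (n : ℕ) → Word 𝒱 n → ℝ)
    (W : (n : ℕ) → Word 𝒳 n → Word 𝒴 n → ℝ) : Prop :=
  ∃ (φ : (n : ℕ) → Word 𝒱 n → Word 𝒳 n) (ψ : (n : ℕ) → Word 𝒴 n → Word 𝒱 n),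
    Tendsto (fun n => errProb (PV n) (W n) (φ n) (ψ n)) atTop (nhds 0)

/-- Output marginal of the channel `W` for an input distribution `P_{Xⁿ}`. -/
noncomputable def outDistX {𝒳 𝒴 : Type*} {n : ℕ}
    (PX : Word 𝒳 n → ℝ) (W : Word 𝒳 n → Word 𝒴 n → ℝ) (y : Word 𝒴 n) : ℝ :=
  ∑' x : Word 𝒳 n, PX x * W x y

/-- Joint law of `(Xⁿ, Yⁿ)`: `P_{Xⁿ}(x) · Wⁿ(y|x)`. -/
noncomputable def jointXY {𝒳 𝒴 : Type*} {n : ℕ}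
    (PX : Word 𝒳 n → ℝ) (W : Word 𝒳 n → Word 𝒴 n → ℝ) :
    Word 𝒳 n × Word 𝒴 n → ℝ :=
  fun z => PX z.1 * W z.1 z.2

/-- Limit superior in probability of a sequence of random variables `Z i`
distributed according to the pmfs `p i`. -/
noncomputable def plimsup {α : ℕ → Type*} (p : (i : ℕ) → α i → ℝ)
    (Z : (i : ℕ) → α i → ℝ) : EReal :=
  sInf {β : EReal |
    Tendsto (fun i => prob (p i) {a | β < (Z i a : EReal)}) atTop (nhds 0)}

/-- Limit inferior in probability of a sequence of random variables `Z i`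
distributed according to the pmfs `p i`. -/
noncomputable def pliminf {α : ℕ → Type*} (p : (i : ℕ) → α i → ℝ)
    (Z : (i : ℕ) → α i → ℝ) : EReal :=
  sSup {β : EReal |
    Tendsto (fun i => prob (p i) {a | (Z i a : EReal) < β}) atTop (nhds 0)}

/-- Spectral sup-entropy rate `H̄(V)`. -/
noncomputable def Hbar {𝒱 : Type*} (PV : (n : ℕ) → Word 𝒱 n → ℝ) : EReal :=
  plimsup (fun n => PV n) (fun n v => (1 / (n : ℝ)) * Real.log (1 / PV n v))

/-- Spectral inf-entropy rate `H_(V)`. -/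
noncomputable def Hlow {𝒱 : Type*} (PV : (n : ℕ) → Word 𝒱 n → ℝ) : EReal :=
  pliminf (fun n => PV n) (fun n v => (1 / (n : ℝ)) * Real.log (1 / PV n v))

/-- Spectral inf-information rate `I_(X;Y)` of the channel `W` with input `X`. -/
noncomputable def Ilow {𝒳 𝒴 : Type*} (PX : (n : ℕ) → Word 𝒳 n → ℝ)
    (W : (n : ℕ) → Word 𝒳 n → Word 𝒴 n → ℝ) : EReal :=
  pliminf (fun n => jointXY (PX n) (W n))
    (fun n z => (1 / (n : ℝ)) * Real.log (W n z.1 z.2 / outDistX (PX n) (W n) z.2))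

/-- Spectral sup-information rate `Ī(X;Y)` of the channel `W` with input `X`. -/
noncomputable def Ihigh {𝒳 𝒴 : Type*} (PX : (n : ℕ) → Word 𝒳 n → ℝ)
    (W : (n : ℕ) → Word 𝒳 n → Word 𝒴 n → ℝ) : EReal :=
  plimsup (fun n => jointXY (PX n) (W n))
    (fun n z => (1 / (n : ℝ)) * Real.log (W n z.1 z.2 / outDistX (PX n) (W n) z.2))

/-- `sup_X I_(X;Y)`: the supremum over all channel inputs. -/
noncomputable def supIlow {𝒳 𝒴 : Type*}
    (W : (n : ℕ) → Word 𝒳 n → Word 𝒴 n → ℝ) : EReal :=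
  ⨆ PX : {PX : (n : ℕ) → Word 𝒳 n → ℝ // ∀ n, IsPMF (PX n)}, Ilow PX.1 W


open MeasureTheory ProbabilityTheory in
open scoped ENNReal in
theorem core {V X Y : Type} [Countable V] [Countable X] [Countable Y] [Nonempty V]
    (p : V → ℝ≥0∞) (P : V → PMF X) (w : X → Y → ℝ≥0∞) (T : V → X → Y → Prop)
    (c : ℝ≥0∞) (hp : ∑' v, p v = 1) (hw : ∀ x, ∑' y, w x y = 1)
    (hT : ∀ v x y, T v x y → (∑' v, ∑' x, p v * P v x * w x y) ≤ c * (w x y * p v)) :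
    ∃ (φ : V → X) (ψ : Y → V),
      ∑' v, p v * ∑' y, {y | ψ y ≠ v}.indicator (w (φ v)) y ≤
        (∑' v, ∑' x, ∑' y, {y | ¬ T v x y}.indicator (fun y => p v * P v x * w x y) y) + c := by
  classical
  let _ : MeasurableSpace X := ⊤
  have : MeasurableSingletonClass X := ⟨fun _ => trivial⟩
  let ν : V → Measure X := fun v => (P v).toMeasure
  have : ∀ v, IsProbabilityMeasure (ν v) := fun v => inferInstance
  let μ : Measure (V → X) := Measure.infinitePi ν
  have mf : ∀ (v : V) (f : X → ℝ≥0∞), Measurable fun φ : V → X => f (φ v) :=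
    fun v f => (measurable_from_top (f := f)).comp (measurable_pi_apply v)
  have E1 : ∀ (v : V) (f : X → ℝ≥0∞), ∫⁻ φ, f (φ v) ∂μ = ∑' x, P v x * f x := by
    intro v f
    have h := (measurePreserving_eval_infinitePi ν v).lintegral_comp (f := f) measurable_from_top
    rw [show (∫⁻ φ, f (φ v) ∂μ) = _ from h, lintegral_countable']
    refine tsum_congr fun x => ?_
    rw [show ν v {x} = P v x from PMF.toMeasure_apply_singleton _ _ (measurableSet_singleton x), mul_comm]
  have hind : iIndepFun (fun (v : V) (φ : V → X) => φ v) μ :=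
    iIndepFun_infinitePi (P := ν) (X := fun _ x => x) (fun _ => measurable_id)
  have E2 : ∀ (v v' : V) (f g : X → ℝ≥0∞), v ≠ v' →
      ∫⁻ φ, f (φ v) * g (φ v') ∂μ = (∑' x, P v x * f x) * ∑' x, P v' x * g x := by
    intro v v' f g hv
    rw [← E1, ← E1]
    exact lintegral_mul_eq_lintegral_mul_lintegral_of_indepFun (mf v f) (mf v' g)
      ((hind.indepFun hv).comp (φ := f) (ψ := g) measurable_from_top measurable_from_top)
  let D : V → X → Y → ℝ≥0∞ := fun v x y => if T v x y then 1 else 0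
  let F1 : (V → X) → ℝ≥0∞ := fun φ => ∑' v, ∑' y, p v * {y | ¬ T v (φ v) y}.indicator (w (φ v)) y
  let F2 : (V → X) → ℝ≥0∞ := fun φ => ∑' v, ∑' y, ∑' v',
    if v = v' then 0 else p v * (w (φ v) y * D v' (φ v') y)
  have m1 : ∀ v y, Measurable fun φ : V → X =>
      p v * {y | ¬ T v (φ v) y}.indicator (w (φ v)) y := fun v y =>
    mf v (fun x => p v * {y | ¬ T v x y}.indicator (w x) y)
  have m2 : ∀ v y v', Measurable fun φ : V → X =>
      if v = v' then 0 else p v * (w (φ v) y * D v' (φ v') y) := by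
    intro v y v'
    split_ifs
    · exact measurable_const
    · exact ((mf v (fun x => w x y)).mul (mf v' (fun x => D v' x y))).const_mul _
  have mF1 : Measurable F1 := Measurable.tsum fun v => Measurable.tsum fun y => m1 v y
  have mF2 : Measurable F2 := Measurable.tsum fun v => Measurable.tsum fun y =>
    Measurable.tsum fun v' => m2 v y v'
  have I1 : ∫⁻ φ, F1 φ ∂μ =
      ∑' v, ∑' x, ∑' y, {y | ¬ T v x y}.indicator (fun y => p v * P v x * w x y) y := by
    rw [lintegral_tsum fun v => (Measurable.tsum fun y => m1 v y).aemeasurable]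
    refine tsum_congr fun v => ?_
    rw [lintegral_tsum fun y => (m1 v y).aemeasurable, ENNReal.tsum_comm]
    refine tsum_congr fun y => ?_
    rw [E1 v (fun x => p v * {y | ¬ T v x y}.indicator (w x) y)]
    refine tsum_congr fun x => ?_
    by_cases h : T v x y <;> simp [h]
    ring
  have I2 : ∫⁻ φ, F2 φ ∂μ ≤ c := by
    rw [lintegral_tsum fun v => (Measurable.tsum fun y =>
      Measurable.tsum fun v' => m2 v y v').aemeasurable]
    calc _ ≤ ∑' v, ∑' y, ∑' v', p v * ((∑' x, P v x * w x y) * ∑' x, P v' x * D v' x y) := by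
          refine ENNReal.tsum_le_tsum fun v => ?_
          rw [lintegral_tsum fun y => (Measurable.tsum fun v' => m2 v y v').aemeasurable]
          refine ENNReal.tsum_le_tsum fun y => ?_
          rw [lintegral_tsum fun v' => (m2 v y v').aemeasurable]
          refine ENNReal.tsum_le_tsum fun v' => ?_
          by_cases h : v = v'
          · simp [h]
          · simp only [h, if_false]
            have hm : Measurable fun φ : V → X => w (φ v) y * D v' (φ v') y :=
              (mf v (fun x => w x y)).mul (mf v' (fun x => D v' x y))
            rw [lintegral_const_mul _ hm,
              E2 v v' (fun x => w x y) (fun x => D v' x y) h]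
      _ = ∑' y, ∑' v', (∑' v, ∑' x, p v * P v x * w x y) * ∑' x, P v' x * D v' x y := by
          rw [ENNReal.tsum_comm]
          refine tsum_congr fun y => ?_
          rw [ENNReal.tsum_comm]
          refine tsum_congr fun v' => ?_
          simp_rw [← mul_assoc]
          rw [ENNReal.tsum_mul_right]
          simp_rw [← ENNReal.tsum_mul_left, ← mul_assoc]
      _ ≤ ∑' y, ∑' v', ∑' x, c * (p v' * (P v' x * w x y)) := by
          refine ENNReal.tsum_le_tsum fun y => ENNReal.tsum_le_tsum fun v' => ?_
          rw [← ENNReal.tsum_mul_left]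
          refine ENNReal.tsum_le_tsum fun x => ?_
          by_cases h : T v' x y
          · simp only [D, h, if_true, mul_one]
            calc _ ≤ (c * (w x y * p v')) * P v' x := by gcongr; exact hT _ _ _ h
              _ = _ := by ring
          · simp [D, h]
      _ = c := by
          rw [ENNReal.tsum_comm]
          have : ∀ v', ∑' y, ∑' x, c * (p v' * (P v' x * w x y)) = c * p v' := by
            intro v'
            rw [ENNReal.tsum_comm]
            simp_rw [ENNReal.tsum_mul_left, hw, mul_one, (P v').tsum_coe, mul_one]
          simp_rw [this, ENNReal.tsum_mul_left, hp, mul_one]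
  obtain ⟨φ, hφ⟩ := exists_le_lintegral (μ := μ) (f := fun φ => F1 φ + F2 φ) (mF1.add mF2).aemeasurable
  rw [lintegral_add_left mF1, I1] at hφ
  let ψ : Y → V := fun y => if h : ∃ v, T v (φ v) y then h.choose else Classical.arbitrary V
  refine ⟨φ, ψ, le_trans ?_ (hφ.trans (by gcongr))⟩
  simp only [F1, F2]
  rw [← ENNReal.tsum_add]
  refine ENNReal.tsum_le_tsum fun v => ?_
  rw [← ENNReal.tsum_add, ← ENNReal.tsum_mul_left]
  refine ENNReal.tsum_le_tsum fun y => ?_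
  by_cases hy : ψ y ≠ v
  · by_cases h : T v (φ v) y
    · have hex : ∃ v, T v (φ v) y := ⟨v, h⟩
      have hs : T (ψ y) (φ (ψ y)) y := by
        have : ψ y = hex.choose := by simp only [ψ, dif_pos hex]
        rw [this]; exact hex.choose_spec
      refine le_add_left (le_trans ?_ (ENNReal.le_tsum (ψ y)))
      rw [if_neg (Ne.symm hy)]
      simp [D, hs, hy]
    · refine le_add_right ?_
      simp [h, hy]
  · simp [hy]

theorem ofReal_prob {α : Type*} (p : α → ℝ) (S : Set α) (h0 : ∀ a, 0 ≤ p a) (hs : Summable p) :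
    ENNReal.ofReal (prob p S) = ∑' a, S.indicator (fun a => ENNReal.ofReal (p a)) a := by
  unfold prob
  rw [ENNReal.ofReal_tsum_of_nonneg (fun a => Set.indicator_nonneg (fun a _ => h0 a) a)
    (hs.indicator S)]
  refine tsum_congr fun a => ?_
  by_cases h : a ∈ S <;> simp [h]

theorem IsPMF.le_one {α : Type*} {p : α → ℝ} (h : IsPMF p) (a : α) : p a ≤ 1 :=
  le_hasSum h.2 a fun b _ => h.1 b

theorem IsPMF.nonempty {α : Type*} {p : α → ℝ} (h : IsPMF p) : Nonempty α := by
  by_contra hn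
  rw [not_nonempty_iff] at hn
  have := h.2.unique hasSum_empty
  norm_num at this

theorem IsPMF.tsum_ofReal {α : Type*} {p : α → ℝ} (h : IsPMF p) :
    ∑' a, ENNReal.ofReal (p a) = 1 := by
  rw [← ENNReal.ofReal_tsum_of_nonneg h.1 h.2.summable, h.2.tsum_eq, ENNReal.ofReal_one]

theorem oneshot {𝒱 𝒳 𝒴 : Type} [Countable 𝒱] [Countable 𝒳] [Countable 𝒴] (n : ℕ)
    (PV : Word 𝒱 n → ℝ) (hPV : IsPMF PV)
    (W : Word 𝒳 n → Word 𝒴 n → ℝ) (hW : ∀ x, IsPMF (W x))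
    (PVX : Word 𝒱 n × Word 𝒳 n → ℝ) (hPVX : IsPMF PVX)
    (hmarg : ∀ v, (∑' x : Word 𝒳 n, PVX (v, x)) = PV v)
    (γ : ℝ) (hγ : 0 < γ) :
    ∃ (φ : Word 𝒱 n → Word 𝒳 n) (ψ : Word 𝒴 n → Word 𝒱 n),
      errProb PV W φ ψ ≤ prob (jointLaw PVX W)
          {z : Word 𝒱 n × Word 𝒳 n × Word 𝒴 n |
            (1 / (n : ℝ)) * Real.log (W z.2.1 z.2.2 / outDist PVX W z.2.2) ≤
              (1 / (n : ℝ)) * Real.log (1 / PV z.1) + γ} + Real.exp (-((n : ℝ) * γ)) := by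
  classical
  have neV : Nonempty (Word 𝒱 n) := hPV.nonempty
  have neX : Nonempty (Word 𝒳 n) := hPVX.nonempty.map Prod.snd
  have hsec : ∀ v, Summable fun x => PVX (v, x) := fun v => hPVX.2.summable.prod_factor v
  have hle : ∀ v x, PVX (v, x) ≤ PV v := fun v x => by
    rw [← hmarg v]
    exact (hsec v).le_tsum x (fun b _ => hPVX.1 _)
  have hP : ∀ v, ∃ P : PMF (Word 𝒳 n), ∀ x,
      ENNReal.ofReal (PV v) * P x = ENNReal.ofReal (PVX (v, x)) := by
    intro v
    by_cases h : PV v = 0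
    · refine ⟨PMF.pure (Classical.arbitrary _), fun x => ?_⟩
      have := hle v x
      rw [h] at this
      simp [h, ENNReal.ofReal_of_nonpos this]
    · have hpos : 0 < PV v := lt_of_le_of_ne (hPV.1 v) (Ne.symm h)
      refine ⟨⟨fun x => ENNReal.ofReal (PVX (v, x) / PV v), ?_⟩, fun x => ?_⟩
      · have : ∑' x, ENNReal.ofReal (PVX (v, x) / PV v) = 1 := by
          rw [← ENNReal.ofReal_tsum_of_nonneg (fun x => div_nonneg (hPVX.1 _) (hPV.1 v))
            ((hsec v).div_const _), tsum_div_const, hmarg, div_self h, ENNReal.ofReal_one]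
        rw [← this]
        exact ENNReal.summable.hasSum
      · change ENNReal.ofReal (PV v) * ENNReal.ofReal (PVX (v, x) / PV v) = _
        rw [← ENNReal.ofReal_mul (hPV.1 v), mul_div_cancel₀ _ h]
  choose P hP using hP
  have hout_s : ∀ y, Summable fun vx : Word 𝒱 n × Word 𝒳 n => PVX vx * W vx.2 y := fun y =>
    Summable.of_nonneg_of_le (fun vx => mul_nonneg (hPVX.1 _) ((hW _).1 _))
      (fun vx => mul_le_of_le_one_right (hPVX.1 _) ((hW _).le_one _)) hPVX.2.summable
  have hout0 : ∀ y, 0 ≤ outDist PVX W y := fun y =>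
    tsum_nonneg fun vx => mul_nonneg (hPVX.1 _) ((hW _).1 _)
  have hout : ∀ y, (∑' v, ∑' x, ENNReal.ofReal (PV v) * P v x * ENNReal.ofReal (W x y)) =
      ENNReal.ofReal (outDist PVX W y) := by
    intro y
    unfold outDist
    rw [ENNReal.ofReal_tsum_of_nonneg (fun vx => mul_nonneg (hPVX.1 _) ((hW _).1 _)) (hout_s y),
      ENNReal.tsum_prod']
    refine tsum_congr fun v => tsum_congr fun x => ?_
    rw [hP, ENNReal.ofReal_mul (hPVX.1 _)]
  obtain ⟨φ, ψ, h⟩ := core (fun v => ENNReal.ofReal (PV v)) P (fun x y => ENNReal.ofReal (W x y))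
    (fun v x y => Real.exp (n * γ) * outDist PVX W y < W x y * PV v)
    (ENNReal.ofReal (Real.exp (-((n : ℝ) * γ)))) hPV.tsum_ofReal (fun x => (hW x).tsum_ofReal)
    (by
      intro v x y hT
      rw [hout, ← ENNReal.ofReal_mul ((hW x).1 y), ← ENNReal.ofReal_mul (Real.exp_pos _).le]
      apply ENNReal.ofReal_le_ofReal
      rw [Real.exp_neg, ← div_eq_inv_mul, le_div_iff₀ (Real.exp_pos _), mul_comm]
      exact hT.le)
  have hj0 : ∀ z, 0 ≤ jointLaw PVX W z := fun z => mul_nonneg (hPVX.1 _) ((hW _).1 _)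
  have hjs : Summable (jointLaw PVX W) := by
    have hfin : ∑' z, ENNReal.ofReal (jointLaw PVX W z) ≠ ⊤ := by
      have : ∑' z, ENNReal.ofReal (jointLaw PVX W z) = 1 := by
        rw [ENNReal.tsum_prod', ← hPVX.tsum_ofReal, ENNReal.tsum_prod']
        refine tsum_congr fun v => ?_
        rw [ENNReal.tsum_prod']
        refine tsum_congr fun x => ?_
        simp only [jointLaw, ENNReal.ofReal_mul (hPVX.1 _)]
        rw [ENNReal.tsum_mul_left, (hW x).tsum_ofReal, mul_one]
      rw [this]
      exact ENNReal.one_ne_top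
    have := ENNReal.summable_toReal hfin
    simpa only [ENNReal.toReal_ofReal (hj0 _)] using this
  refine ⟨φ, ψ, ?_⟩
  have hp0 : ∀ v, 0 ≤ prob (W (φ v)) {y | ψ y ≠ v} := fun v =>
    tsum_nonneg fun y => Set.indicator_nonneg (fun y _ => (hW _).1 y) y
  have hp1 : ∀ v, prob (W (φ v)) {y | ψ y ≠ v} ≤ 1 := fun v => by
    rw [← (hW (φ v)).2.tsum_eq]
    exact ((hW (φ v)).2.summable.indicator _).tsum_le_tsum
      (Set.indicator_le_self' fun y _ => (hW _).1 y) (hW (φ v)).2.summable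
  have hpr0 : ∀ S, 0 ≤ prob (jointLaw PVX W) S := fun S =>
    tsum_nonneg fun y => Set.indicator_nonneg (fun y _ => hj0 y) y
  rw [← ENNReal.ofReal_le_ofReal_iff (add_nonneg (hpr0 _) (Real.exp_pos _).le),
    ENNReal.ofReal_add (hpr0 _) (Real.exp_pos _).le, ofReal_prob _ _ hj0 hjs]
  unfold errProb
  rw [ENNReal.ofReal_tsum_of_nonneg (fun v => mul_nonneg (hPV.1 v) (hp0 v))
    (Summable.of_nonneg_of_le (fun v => mul_nonneg (hPV.1 v) (hp0 v))
      (fun v => mul_le_of_le_one_right (hPV.1 v) (hp1 v)) hPV.2.summable)]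
  have e1 : ∀ v, ENNReal.ofReal (PV v * prob (W (φ v)) {y | ψ y ≠ v}) =
      ENNReal.ofReal (PV v) *
        ∑' y, {y | ψ y ≠ v}.indicator (fun y => ENNReal.ofReal (W (φ v) y)) y := fun v => by
    rw [ENNReal.ofReal_mul (hPV.1 v), ofReal_prob _ _ (hW _).1 (hW _).2.summable]
  simp_rw [e1]
  refine h.trans ?_
  gcongr
  rw [ENNReal.tsum_prod']
  refine ENNReal.tsum_le_tsum fun v => ?_
  rw [ENNReal.tsum_prod']
  refine ENNReal.tsum_le_tsum fun x => ENNReal.tsum_le_tsum fun y => ?_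
  simp_rw [hP, ← ENNReal.ofReal_mul (hPVX.1 (v, x))]
  by_cases hz : PVX (v, x) * W x y = 0
  · refine le_trans (Set.indicator_le_self _ _ _) ?_
    simp [hz]
  by_cases hb : (1 / (n : ℝ)) * Real.log (W x y / outDist PVX W y) ≤
              (1 / (n : ℝ)) * Real.log (1 / PV v) + γ
  · refine le_trans (Set.indicator_le_self _ _ _) ?_
    rw [Set.indicator_of_mem (by exact hb)]
    rfl
  · rw [Set.indicator_of_notMem]
    · exact zero_le
    simp only [Set.mem_setOf_eq, not_not]
    have hq : 0 < PVX (v, x) := lt_of_le_of_ne (hPVX.1 _) (Ne.symm (left_ne_zero_of_mul hz))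
    have hw : 0 < W x y := lt_of_le_of_ne ((hW _).1 _) (Ne.symm (right_ne_zero_of_mul hz))
    have hv : 0 < PV v := hq.trans_le (hle v x)
    have hy : 0 < outDist PVX W y := (mul_pos hq hw).trans_le
      ((hout_s y).le_tsum (v, x) (fun b _ => mul_nonneg (hPVX.1 _) ((hW _).1 _)))
    push Not at hb
    have hn : (0 : ℝ) < n := by
      rcases Nat.eq_zero_or_pos n with h0 | h0
      · exfalso
        have : (n : ℝ) = 0 := by exact_mod_cast h0
        rw [this] at hb
        simp at hb
        linarith
      · exact_mod_cast h0
    have hb2 : Real.log (1 / PV v) + n * γ < Real.log (W x y / outDist PVX W y) := by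
      have := mul_lt_mul_of_pos_left hb hn
      field_simp at this
      simpa using this
    rw [← Real.log_exp ((n : ℝ) * γ), ← Real.log_mul (by positivity) (by positivity),
      Real.log_lt_log_iff (by positivity) (by positivity)] at hb2
    field_simp at hb2
    linarith

/-- **Direct theorem** (Theorem 4.1). -/
theorem direct_theorem
    {𝒱 𝒳 𝒴 : Type} [Countable 𝒱] [Countable 𝒳] [Countable 𝒴]
    (PV : (n : ℕ) → Word 𝒱 n → ℝ) (hPV : ∀ n, IsPMF (PV n))
    (W : (n : ℕ) → Word 𝒳 n → Word 𝒴 n → ℝ) (hW : ∀ n x, IsPMF (W n x))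
    (PVX : (n : ℕ) → Word 𝒱 n × Word 𝒳 n → ℝ) (hPVX : ∀ n, IsPMF (PVX n))
    (hmarg : ∀ n v, (∑' x : Word 𝒳 n, PVX n (v, x)) = PV n v)
    (γ : ℕ → ℝ) (hγpos : ∀ n, 0 < γ n)
    (hγ0 : Tendsto γ atTop (nhds 0))
    (hnγ : Tendsto (fun n : ℕ => (n : ℝ) * γ n) atTop atTop)
    (hspec : Tendsto (fun n =>
        prob (jointLaw (PVX n) (W n))
          {z : Word 𝒱 n × Word 𝒳 n × Word 𝒴 n |
            (1 / (n : ℝ)) * Real.log (W n z.2.1 z.2.2 / outDist (PVX n) (W n) z.2.2) ≤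
              (1 / (n : ℝ)) * Real.log (1 / PV n z.1) + γ n}) atTop (nhds 0)) :
    Transmissible PV W := by
  choose φ ψ h using fun n => oneshot n (PV n) (hPV n) (W n) (hW n) (PVX n) (hPVX n) (hmarg n)
    (γ n) (hγpos n)
  refine ⟨φ, ψ, squeeze_zero (fun n => ?_) h ?_⟩
  · exact tsum_nonneg fun v => mul_nonneg ((hPV n).1 v)
      (tsum_nonneg fun y => Set.indicator_nonneg (fun y _ => (hW n _).1 y) y)
  · simpa using hspec.add (Real.tendsto_exp_neg_atTop_nhds_zero.comp hnγ)

end ISC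
end

section
/- Strict domination implies transmissibility via separated coding (Remark 4.2). Let V = {Vⁿ} be a general source and W = {Wⁿ} a general channel. Suppose there exist a channel input X = {Xⁿ}, a real sequence {cₙ}, and a sequence {γₙ} with γₙ > 0, γₙ → 0, nγₙ → ∞, such that limₙ ( Pr{ (1/n) log( 1/P_{Vⁿ}(Vⁿ) ) ≥ cₙ } + Pr{ (1/n) log( Wⁿ(Yⁿ|Xⁿ)/P_{Yⁿ}(Yⁿ) ) ≤ cₙ + γₙ } ) = 0, where Yⁿ is the channel output due to input Xⁿ. Then V is transmissible over W. -/
open Filter Real Topology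

namespace ISC

section Helpers

variable {α β ι V Y : Type*}

lemma IsPMF.summable_ind {p : α → ℝ} (hp : IsPMF p) (S : Set α) : Summable (S.indicator p) :=
  hp.2.summable.indicator S

lemma IsPMF.prob_nonneg {p : α → ℝ} (hp : IsPMF p) (S : Set α) : 0 ≤ prob p S :=
  tsum_nonneg fun a => Set.indicator_nonneg (fun a _ => hp.1 a) a

lemma IsPMF.prob_mono {p : α → ℝ} (hp : IsPMF p) {S T : Set α} (h : S ⊆ T) :
    prob p S ≤ prob p T :=
  (hp.summable_ind S).tsum_le_tsum
    (fun a => Set.indicator_le_indicator_of_subset h (fun a => hp.1 a) a) (hp.summable_ind T)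

lemma IsPMF.prob_univ {p : α → ℝ} (hp : IsPMF p) : prob p Set.univ = 1 := by
  simp [prob, hp.2.tsum_eq]

lemma IsPMF.prob_le_one {p : α → ℝ} (hp : IsPMF p) (S : Set α) : prob p S ≤ 1 := by
  rw [← hp.prob_univ]; exact hp.prob_mono (Set.subset_univ _)

lemma IsPMF.prob_union_le {p : α → ℝ} (hp : IsPMF p) (S T : Set α) :
    prob p (S ∪ T) ≤ prob p S + prob p T := by
  unfold prob
  rw [← (hp.summable_ind S).tsum_add (hp.summable_ind T)]
  refine (hp.summable_ind _).tsum_le_tsum (fun a => ?_) ((hp.summable_ind S).add (hp.summable_ind T))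
  have := hp.1 a
  by_cases h1 : a ∈ S <;> by_cases h2 : a ∈ T <;> simp [h1, h2, this]

lemma IsPMF.prob_compl {p : α → ℝ} (hp : IsPMF p) (S : Set α) :
    prob p S + prob p Sᶜ = 1 := by
  unfold prob
  rw [← (hp.summable_ind S).tsum_add (hp.summable_ind Sᶜ), ← hp.2.tsum_eq]
  congr 1; ext a
  exact Set.indicator_self_add_compl_apply S p a

lemma joint_pmf {p : ι → ℝ} (hp : IsPMF p) {w : ι → Y → ℝ} (hw : ∀ i, IsPMF (w i)) :
    IsPMF (fun z : ι × Y => p z.1 * w z.1 z.2) := by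
  have hnn : ∀ z : ι × Y, 0 ≤ p z.1 * w z.1 z.2 := fun z => mul_nonneg (hp.1 _) ((hw _).1 _)
  refine ⟨hnn, ?_⟩
  have h1 : ∀ i, HasSum (fun y => p i * w i y) (p i) := fun i => by
    simpa using (hw i).2.mul_left (p i)
  have hs : Summable (fun z : ι × Y => p z.1 * w z.1 z.2) := by
    rw [summable_prod_of_nonneg hnn]
    refine ⟨fun i => (h1 i).summable, ?_⟩
    simpa [(h1 _).tsum_eq] using hp.2.summable
  have := hs.hasSum.prod_fiberwise h1
  have h3 := hs.hasSum
  rwa [this.unique hp.2] at h3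

lemma prob_joint {p : ι → ℝ} (hp : IsPMF p) {w : ι → Y → ℝ} (hw : ∀ i, IsPMF (w i))
    (S : ι → Set Y) :
    HasSum (fun i => p i * prob (w i) (S i))
      (prob (fun z : ι × Y => p z.1 * w z.1 z.2) {z | z.2 ∈ S z.1}) := by
  have hs := (joint_pmf hp hw).summable_ind {z | z.2 ∈ S z.1}
  refine hs.hasSum.prod_fiberwise (fun i => ?_)
  have := ((hw i).summable_ind (S i)).hasSum.mul_left (p i)
  change HasSum _ (p i * ∑' y, (S i).indicator (w i) y)
  have he : (fun y => {z : ι × Y | z.2 ∈ S z.1}.indicator (fun z => p z.1 * w z.1 z.2) (i, y)) =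
      fun y => p i * (S i).indicator (w i) y := by
    funext y
    by_cases hy : y ∈ S i <;> simp [hy, Set.indicator]
  rw [he]
  exact this

lemma out_pmf {p : ι → ℝ} (hp : IsPMF p) {w : ι → Y → ℝ} (hw : ∀ i, IsPMF (w i)) :
    IsPMF (fun y => ∑' i, p i * w i y) := by
  have hj := joint_pmf hp hw
  refine ⟨fun y => tsum_nonneg fun i => mul_nonneg (hp.1 _) ((hw _).1 _), ?_⟩
  have h2 := (Equiv.prodComm Y ι).hasSum_iff.2 hj.2
  exact h2.prod_fiberwise (fun y => (h2.summable.prod_factor y).hasSum)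

lemma prob_out {p : ι → ℝ} (hp : IsPMF p) {w : ι → Y → ℝ} (hw : ∀ i, IsPMF (w i)) (U : Set Y) :
    HasSum (fun i => p i * prob (w i) U) (prob (fun y => ∑' i, p i * w i y) U) := by
  have h1 := prob_joint hp hw (fun _ => U)
  convert h1 using 1
  have hs := (joint_pmf hp hw).summable_ind {z | z.2 ∈ U}
  have h2 := (Equiv.prodComm Y ι).hasSum_iff.2 hs.hasSum
  refine HasSum.unique ?_ (h2.prod_fiberwise (fun y => (h2.summable.prod_factor y).hasSum))
  have h3 := ((out_pmf hp hw).summable_ind U).hasSum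
  change HasSum _ (∑' y, U.indicator (fun y => ∑' i, p i * w i y) y)
  convert h3 using 1
  ext y
  by_cases hy : y ∈ U <;> simp [hy, Set.indicator]

lemma feinstein_step {p : ι → ℝ} (hp : IsPMF p) {w : ι → Y → ℝ} (hw : ∀ i, IsPMF (w i))
    (T : ι → Set Y) (U : Set Y) :
    ∃ i, 1 - prob (fun z : ι × Y => p z.1 * w z.1 z.2) {z | z.2 ∈ (T z.1)ᶜ}
      - prob (fun y => ∑' i, p i * w i y) U ≤ prob (w i) (T i \ U) := by
  by_contra! hcon
  have hB := prob_joint hp hw (fun i => (T i)ᶜ)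
  have hU := prob_out hp hw U
  set B := prob (fun z : ι × Y => p z.1 * w z.1 z.2) {z | z.2 ∈ (T z.1)ᶜ}
  set u := prob (fun y => ∑' i, p i * w i y) U
  have key : ∀ i, B + u < prob (w i) (T i)ᶜ + prob (w i) U := by
    intro i
    have h1 := (hw i).prob_compl (T i \ U)
    have h2 := (hw i).prob_mono (S := (T i \ U)ᶜ) (T := (T i)ᶜ ∪ U) (by
      intro y hy; by_cases h : y ∈ T i <;> simp_all)
    have h3 := (hw i).prob_union_le (T i)ᶜ U
    have := hcon i
    linarith
  have hsum := hB.add hU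
  have hc : HasSum (fun i => p i * (B + u)) (1 * (B + u)) := hp.2.mul_right _
  obtain ⟨i, hi⟩ : ∃ i, 0 < p i := by
    by_contra! h
    have : p = 0 := funext fun i => le_antisymm (h i) (hp.1 i)
    have h2 := hp.2
    rw [this] at h2
    exact zero_ne_one (hasSum_zero.unique h2)
  have hlt : 1 * (B + u) < B + u := by
    refine hasSum_lt (i := i) (fun j => ?_) ?_ hc hsum
    · have := mul_le_mul_of_nonneg_left (key j).le (hp.1 j)
      simpa [mul_add] using this
    · have := mul_lt_mul_of_pos_left (key i) hi
      simpa [mul_add] using this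
  linarith

lemma feinstein {p : ι → ℝ} (hp : IsPMF p) {w : ι → Y → ℝ} (hw : ∀ i, IsPMF (w i))
    (κ : ℝ) (hκ : 0 < κ) (B : ℝ)
    (hB : prob (fun z : ι × Y => p z.1 * w z.1 z.2)
      {z | w z.1 z.2 < κ * ∑' i, p i * w i z.2} ≤ B) (s : Finset V) :
    ∃ (f : V → ι) (D : V → Set Y), (∀ v ∈ s, ∀ v' ∈ s, v ≠ v' → Disjoint (D v) (D v')) ∧
      (∀ v ∈ s, 1 - B - s.card / κ ≤ prob (w (f v)) (D v)) ∧
      prob (fun y => ∑' i, p i * w i y) (⋃ v ∈ s, D v) ≤ s.card / κ := by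
  classical
  have hq := out_pmf hp hw
  induction s using Finset.induction_on with
  | empty =>
    have : Nonempty ι := by
      by_contra h
      rw [not_nonempty_iff] at h
      exact zero_ne_one (hasSum_empty.unique hp.2)
    refine ⟨fun _ => this.some, fun _ => ∅, by simp, by simp, by simp [prob]⟩
  | insert a s ha ih =>
    obtain ⟨f, D, hdis, herr, hcov⟩ := ih
    set U := ⋃ v ∈ s, D v with hUdef
    let T : ι → Set Y := fun i => {y | κ * ∑' i, p i * w i y ≤ w i y}
    obtain ⟨i, hi⟩ := feinstein_step hp hw T U
    have hT : {z : ι × Y | z.2 ∈ (T z.1)ᶜ} = {z | w z.1 z.2 < κ * ∑' i, p i * w i z.2} := by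
      ext z; simp [T]
    rw [hT] at hi
    have hcard : ((insert a s).card : ℝ) / κ = s.card / κ + 1 / κ := by
      rw [Finset.card_insert_of_notMem ha]; push_cast; ring
    have hκ' : 0 < 1 / κ := by positivity
    have hne : ∀ v ∈ s, v ≠ a := fun v hv h => ha (h ▸ hv)
    have hsub : ∀ v ∈ s, D v ⊆ U := fun v hv => Set.subset_biUnion_of_mem (u := D) hv
    refine ⟨Function.update f a i, Function.update D a (T i \ U), ?_, ?_, ?_⟩
    · intro v hv v' hv' hvv
      rw [Finset.mem_insert] at hv hv'
      rcases hv with rfl | hv <;> rcases hv' with rfl | hv'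
      · exact absurd rfl hvv
      · rw [Function.update_self, Function.update_of_ne (hne _ hv')]
        exact Set.disjoint_sdiff_left.mono_right (hsub _ hv')
      · rw [Function.update_self, Function.update_of_ne (hne _ hv)]
        exact Set.disjoint_sdiff_right.mono_left (hsub _ hv)
      · rw [Function.update_of_ne (hne _ hv), Function.update_of_ne (hne _ hv')]
        exact hdis v hv v' hv' hvv
    · intro v hv
      rw [Finset.mem_insert] at hv
      rw [hcard]
      rcases hv with rfl | hv
      · rw [Function.update_self, Function.update_self]; linarith
      · rw [Function.update_of_ne (hne _ hv), Function.update_of_ne (hne _ hv)]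
        linarith [herr v hv]
    · have hun : (⋃ v ∈ insert a s, Function.update D a (T i \ U) v) ⊆ U ∪ (T i \ U) := by
        intro y hy
        simp only [Set.mem_iUnion, Finset.mem_insert] at hy
        obtain ⟨v, hv, hy⟩ := hy
        rcases hv with rfl | hv
        · rw [Function.update_self] at hy; exact Or.inr hy
        · rw [Function.update_of_ne (hne _ hv)] at hy; exact Or.inl (hsub v hv hy)
      have h1 := hq.prob_mono hun
      have h2 := hq.prob_union_le U (T i \ U)
      have h3 : prob (fun y => ∑' i, p i * w i y) (T i \ U) ≤ 1 / κ := by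
        rw [le_div_iff₀ hκ]
        refine le_trans ?_ ((hw i).prob_le_one (T i \ U))
        unfold prob
        rw [← tsum_mul_right]
        refine ((hq.summable_ind _).mul_right κ).tsum_le_tsum (fun y => ?_) ((hw i).summable_ind _)
        by_cases hy : y ∈ T i \ U
        · simp only [Set.indicator_of_mem hy]
          rw [mul_comm]; exact hy.1
        · simp [Set.indicator_of_notMem hy]
      rw [hcard]; linarith

end Helpers

lemma one_shot {𝒱 𝒳 𝒴 : Type*} {n : ℕ} (hn : 0 < n)
    (PV : Word 𝒱 n → ℝ) (hPV : IsPMF PV)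
    (W : Word 𝒳 n → Word 𝒴 n → ℝ) (hW : ∀ x, IsPMF (W x))
    (PVX : Word 𝒱 n × Word 𝒳 n → ℝ) (hPVX : IsPMF PVX) (c γ : ℝ) :
    ∃ (φ : Word 𝒱 n → Word 𝒳 n) (ψ : Word 𝒴 n → Word 𝒱 n),
      errProb PV W φ ψ ≤
        prob PV {v : Word 𝒱 n | c ≤ (1 / (n : ℝ)) * Real.log (1 / PV v)} +
        prob (jointLaw PVX W)
          {z : Word 𝒱 n × Word 𝒳 n × Word 𝒴 n |
            (1 / (n : ℝ)) * Real.log (W z.2.1 z.2.2 / outDist PVX W z.2.2) ≤ c + γ}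
        + Real.exp (-(n * γ)) := by
  classical
  have hn' : (0 : ℝ) < n := by exact_mod_cast hn
  set A := {v : Word 𝒱 n | c ≤ (1 / (n : ℝ)) * Real.log (1 / PV v)} with hA
  set E := {z : Word 𝒱 n × Word 𝒳 n × Word 𝒴 n |
            (1 / (n : ℝ)) * Real.log (W z.2.1 z.2.2 / outDist PVX W z.2.2) ≤ c + γ} with hE
  set B := prob (jointLaw PVX W) E with hBdef
  have hV : Nonempty (Word 𝒱 n) := by
    by_contra h
    rw [not_nonempty_iff] at h
    exact zero_ne_one (hasSum_empty.unique hPV.2)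
  let w : Word 𝒱 n × Word 𝒳 n → Word 𝒴 n → ℝ := fun i => W i.2
  have hw : ∀ i, IsPMF (w i) := fun i => hW i.2
  set κ := Real.exp (n * (c + γ)) with hκ
  have hκ0 : 0 < κ := Real.exp_pos _
  have hj := joint_pmf hPVX hw
  have hB : prob (fun z : (Word 𝒱 n × Word 𝒳 n) × Word 𝒴 n => PVX z.1 * w z.1 z.2)
      {z | w z.1 z.2 < κ * ∑' i, PVX i * w i z.2} ≤ B := by
    have hBe : B = prob (fun z : (Word 𝒱 n × Word 𝒳 n) × Word 𝒴 n => PVX z.1 * w z.1 z.2)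
        (Equiv.prodAssoc _ _ _ ⁻¹' E) := by
      rw [hBdef]; unfold prob
      rw [← (Equiv.prodAssoc (Word 𝒱 n) (Word 𝒳 n) (Word 𝒴 n)).tsum_eq]
      rfl
    rw [hBe]
    refine (hj.summable_ind _).tsum_le_tsum (fun z => ?_) (hj.summable_ind _)
    by_cases hz : w z.1 z.2 < κ * ∑' i, PVX i * w i z.2
    swap
    · rw [Set.indicator_of_notMem (by simpa using hz)]
      exact Set.indicator_nonneg (fun a _ => hj.1 a) z
    rw [Set.indicator_of_mem (by exact hz)]
    rcases ((hw z.1).1 z.2).eq_or_lt with h0 | h0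
    · rw [← h0, mul_zero]
      exact Set.indicator_nonneg (fun a _ => hj.1 a) z
    rw [Set.indicator_of_mem]
    have hq : 0 < outDist PVX W z.2 := by
      by_contra! hq
      have : κ * outDist PVX W z.2 ≤ 0 := mul_nonpos_of_nonneg_of_nonpos hκ0.le hq
      have h2 : w z.1 z.2 < κ * outDist PVX W z.2 := hz
      linarith
    show (1 / (n : ℝ)) * Real.log (w z.1 z.2 / outDist PVX W z.2) ≤ c + γ
    have h1 : w z.1 z.2 / outDist PVX W z.2 ≤ κ := by
      rw [div_le_iff₀ hq]; exact hz.le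
    have h2 := Real.log_le_log (by positivity) h1
    rw [hκ, Real.log_exp] at h2
    rw [one_div, inv_mul_le_iff₀ hn']
    exact h2
  have hfin : {v | Real.exp (-(n * c)) ≤ PV v}.Finite := by
    have := hPV.2.summable.tendsto_cofinite_zero.eventually (gt_mem_nhds (Real.exp_pos (-(n * c))))
    rw [Filter.eventually_cofinite] at this
    simpa using this
  let s := hfin.toFinset
  have hs : ∀ v, v ∈ s ↔ Real.exp (-(n * c)) ≤ PV v := fun v => by simp [s]
  have hcard : (s.card : ℝ) / κ ≤ Real.exp (-(n * γ)) := by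
    have h1 : (s.card : ℝ) * Real.exp (-(n * c)) ≤ 1 := by
      calc (s.card : ℝ) * Real.exp (-(n * c)) = ∑ v ∈ s, Real.exp (-(n * c)) := by simp
        _ ≤ ∑ v ∈ s, PV v := Finset.sum_le_sum fun v hv => (hs v).1 hv
        _ ≤ 1 := sum_le_hasSum s (fun v _ => hPV.1 v) hPV.2
    have h2 : (s.card : ℝ) / κ = (s.card * Real.exp (-(n * c))) * Real.exp (-(n * γ)) := by
      rw [hκ, div_eq_mul_inv, ← Real.exp_neg, mul_assoc, ← Real.exp_add]; congr 2; ring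
    rw [h2]
    exact mul_le_of_le_one_left (Real.exp_pos _).le h1
  have hnotin : ∀ v, v ∉ s → 0 < PV v → v ∈ A := by
    intro v hv h0
    rw [hs, not_le] at hv
    have h2 := Real.log_le_log h0 hv.le
    rw [Real.log_exp] at h2
    show c ≤ (1 / (n : ℝ)) * Real.log (1 / PV v)
    rw [one_div, one_div, Real.log_inv, le_inv_mul_iff₀ hn']
    linarith
  obtain ⟨f, D, hdis, herr, -⟩ := feinstein hPVX hw κ hκ0 B hB s
  let ψ : Word 𝒴 n → Word 𝒱 n := fun y =>
    if h : ∃ v ∈ s, y ∈ D v then h.choose else hV.some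
  have hψ : ∀ v ∈ s, ∀ y ∈ D v, ψ y = v := by
    intro v hv y hy
    have h : ∃ v ∈ s, y ∈ D v := ⟨v, hv, hy⟩
    have hc := h.choose_spec
    simp only [ψ, dif_pos h]
    by_contra hne
    exact Set.disjoint_left.1 (hdis _ hc.1 v hv hne) hc.2 hy
  refine ⟨fun v => (f v).2, ψ, ?_⟩
  set e := Real.exp (-(n * γ)) with he
  have hB0 : 0 ≤ B := le_trans (hj.prob_nonneg _) hB
  have hbound : ∀ v, PV v * prob (W (f v).2) {y | ψ y ≠ v} ≤
      A.indicator PV v + PV v * (B + e) := by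
    intro v
    have hnn := mul_nonneg (hPV.1 v) (add_nonneg hB0 (Real.exp_pos (-(n * γ))).le)
    by_cases hv : v ∈ s
    · have h1 := herr v hv
      have h2 := (hW (f v).2).prob_compl (D v)
      have h3 := (hW (f v).2).prob_mono (S := {y | ψ y ≠ v}) (T := (D v)ᶜ)
        (fun y hy hy' => hy (hψ v hv y hy'))
      have h4 : prob (W (f v).2) {y | ψ y ≠ v} ≤ B + e := by
        have h1' : 1 - B - s.card / κ ≤ prob (W (f v).2) (D v) := h1
        linarith
      have := mul_le_mul_of_nonneg_left h4 (hPV.1 v)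
      have := Set.indicator_nonneg (s := A) (fun a _ => hPV.1 a) v
      linarith
    · rcases (hPV.1 v).eq_or_lt with h0 | h0
      · have := Set.indicator_nonneg (s := A) (fun a _ => hPV.1 a) v
        rw [← h0, zero_mul, zero_mul, add_zero]
        exact this
      · rw [Set.indicator_of_mem (hnotin v hv h0)]
        have := mul_le_of_le_one_right (hPV.1 v) ((hW (f v).2).prob_le_one {y | ψ y ≠ v})
        linarith
  have hR := (hPV.summable_ind A).hasSum.add (hPV.2.mul_right (B + e))
  have hL : Summable (fun v => PV v * prob (W (f v).2) {y | ψ y ≠ v}) :=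
    Summable.of_nonneg_of_le (fun v => mul_nonneg (hPV.1 v) ((hW _).prob_nonneg _)) hbound
      hR.summable
  have := hasSum_le hbound hL.hasSum hR
  unfold errProb
  unfold prob at *
  linarith

/-- **Strict domination implies transmissibility via separated coding** (Remark 4.2). -/
theorem strict_domination_implies_transmissibility
    {𝒱 𝒳 𝒴 : Type} [Countable 𝒱] [Countable 𝒳] [Countable 𝒴]
    (PV : (n : ℕ) → Word 𝒱 n → ℝ) (hPV : ∀ n, IsPMF (PV n))
    (W : (n : ℕ) → Word 𝒳 n → Word 𝒴 n → ℝ) (hW : ∀ n x, IsPMF (W n x))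
    (PVX : (n : ℕ) → Word 𝒱 n × Word 𝒳 n → ℝ) (hPVX : ∀ n, IsPMF (PVX n))
    (hmarg : ∀ n v, (∑' x : Word 𝒳 n, PVX n (v, x)) = PV n v)
    (c : ℕ → ℝ)
    (γ : ℕ → ℝ) (hγpos : ∀ n, 0 < γ n)
    (hγ0 : Tendsto γ atTop (nhds 0))
    (hnγ : Tendsto (fun n : ℕ => (n : ℝ) * γ n) atTop atTop)
    (hdom : Tendsto (fun n =>
        prob (PV n) {v : Word 𝒱 n | c n ≤ (1 / (n : ℝ)) * Real.log (1 / PV n v)} +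
        prob (jointLaw (PVX n) (W n))
          {z : Word 𝒱 n × Word 𝒳 n × Word 𝒴 n |
            (1 / (n : ℝ)) * Real.log (W n z.2.1 z.2.2 / outDist (PVX n) (W n) z.2.2) ≤
              c n + γ n}) atTop (nhds 0)) :
    Transmissible PV W := by
  have hex : ∀ n : ℕ, ∃ (φ : Word 𝒱 n → Word 𝒳 n) (ψ : Word 𝒴 n → Word 𝒱 n), 0 < n →
      errProb (PV n) (W n) φ ψ ≤
        prob (PV n) {v : Word 𝒱 n | c n ≤ (1 / (n : ℝ)) * Real.log (1 / PV n v)} +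
        prob (jointLaw (PVX n) (W n))
          {z : Word 𝒱 n × Word 𝒳 n × Word 𝒴 n |
            (1 / (n : ℝ)) * Real.log (W n z.2.1 z.2.2 / outDist (PVX n) (W n) z.2.2) ≤
              c n + γ n}
        + Real.exp (-(n * γ n)) := by
    intro n
    rcases Nat.eq_zero_or_pos n with rfl | hn
    · exact ⟨fun _ => Fin.elim0, fun _ => Fin.elim0, fun h => absurd h (lt_irrefl _)⟩
    · obtain ⟨φ, ψ, h⟩ := one_shot hn (PV n) (hPV n) (W n) (hW n) (PVX n) (hPVX n) (c n) (γ n)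
      exact ⟨φ, ψ, fun _ => h⟩
  choose φ ψ h using hex
  refine ⟨φ, ψ, ?_⟩
  have hlim := hdom.add (Real.tendsto_exp_neg_atTop_nhds_zero.comp hnγ)
  rw [add_zero] at hlim
  refine tendsto_of_tendsto_of_tendsto_of_le_of_le' tendsto_const_nhds hlim ?_ ?_
  · exact Eventually.of_forall fun n => tsum_nonneg fun v =>
      mul_nonneg ((hPV n).1 v) ((hW n _).prob_nonneg _)
  · filter_upwards [eventually_gt_atTop 0] with n hn
    exact h n hn

end ISC
end
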